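/- Let f be a monotone, normalized, submodular function on a finite ground set of size n ≥ 3 (the edge set of a graph) with f({j}) > 0 for every element j, with total curvature κ_f satisfying 0 < κ_f < 1, and let f^κ be its curve-normalized version. Let 𝒞 be a nonempty family of subsets, and suppose a function ĝ satisfies f^κ(X) ≤ ĝ(X) ≤ (n/2) · f^κ(X) for all X ∈ 𝒞. Then the function f̂(X) := κ_f · (2/n) · ĝ(X) + (1 − κ_f) · Σ_{j∈X} f({j}) satisfies f̂(X) ≤ f(X) ≤ (n / (2 + (n − 2)(1 − κ_f))) · f̂(X) for every nonempty X ∈ 𝒞; consequently any minimizer X̂ of f̂ over 𝒞 satisfies f(X̂) ≤ (n / (2 + (n − 2)(1 − κ_f))) · min_{X∈𝒞} f(X). -/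

import Mathlib

/-!
Write `M X = ∑ j ∈ X, f {j}`, so that `f = κ fκ + (1 - κ) M`. The upper bound on `g` gives
`fhat ≤ κ fκ + (1 - κ) M = f`. The lower bound on `g`, together with subadditivity `f ≤ M`
(`le_sum_singleton`), gives
`fhat ≥ (2/n) κ fκ + (1 - κ) M = (2/n) f + (1 - 2/n) (1 - κ) M ≥ ((2 + (n - 2)(1 - κ)) / n) f`.
Hence `f Xhat ≤ c * fhat Xhat ≤ c * fhat Xstar ≤ c * f Xstar` for the stated ratio `c`.
-/

open Finset

theorem le_sum_singleton {V : Type*} [DecidableEq V] (f : Finset V → ℝ)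
    (hsub : ∀ S T : Finset V, f S + f T ≥ f (S ∪ T) + f (S ∩ T))
    (hnorm : f ∅ = 0) (X : Finset V) : f X ≤ ∑ j ∈ X, f {j} := by
  induction X using Finset.induction_on with
  | empty => simp [hnorm]
  | insert a s ha ih =>
    have h := hsub {a} s
    rw [Finset.singleton_inter_of_notMem ha, hnorm, ← Finset.insert_eq] at h
    rw [Finset.sum_insert ha]
    linarith

/-- PNA corollary: if `ĝ` satisfies `f^κ(X) ≤ ĝ(X) ≤ (n/2) f^κ(X)` on `𝒞`,
then `f̂(X) = κ (2/n) ĝ(X) + (1-κ) ∑_{j∈X} f {j}` satisfies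
`f̂(X) ≤ f(X) ≤ (n / (2 + (n-2)(1-κ))) f̂(X)` on nonempty members of `𝒞`, and
any minimizer of `f̂` over `𝒞` is an `n / (2 + (n-2)(1-κ))`-approximate
minimizer of `f` over `𝒞`. -/
theorem pna_minimization_guarantee
    {V : Type*} [Fintype V] [DecidableEq V] [Nonempty V]
    (n : ℕ) (hn : Fintype.card V = n) (hn3 : 3 ≤ n)
    (f : Finset V → ℝ)
    (hsub : ∀ S T : Finset V, f S + f T ≥ f (S ∪ T) + f (S ∩ T))
    (hmono : ∀ S T : Finset V, S ⊆ T → f S ≤ f T)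
    (hnorm : f ∅ = 0)
    (hpos : ∀ j : V, 0 < f {j})
    (κ : ℝ)
    (hκ : κ = 1 - univ.inf' univ_nonempty
      (fun j : V => (f univ - f (univ \ {j})) / f {j}))
    (hκ0 : 0 < κ) (hκ1 : κ < 1)
    (fκ : Finset V → ℝ)
    (hfκ : ∀ X : Finset V, fκ X = (f X - (1 - κ) * ∑ j ∈ X, f {j}) / κ)
    (C : Finset (Finset V)) (hC : C.Nonempty) (hCne : ∀ X ∈ C, X.Nonempty)
    (g : Finset V → ℝ)
    (hg : ∀ X ∈ C, fκ X ≤ g X ∧ g X ≤ ((n : ℝ) / 2) * fκ X)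
    (fhat : Finset V → ℝ)
    (hfhat : ∀ X : Finset V,
      fhat X = κ * (2 / (n : ℝ)) * g X + (1 - κ) * ∑ j ∈ X, f {j})
    (Xhat : Finset V) (hXhat : Xhat ∈ C) (hmin : ∀ X ∈ C, fhat Xhat ≤ fhat X)
    (Xstar : Finset V) (hXstar : Xstar ∈ C) (hopt : ∀ X ∈ C, f Xstar ≤ f X) :
    (∀ X ∈ C, fhat X ≤ f X ∧
      f X ≤ ((n : ℝ) / (2 + ((n : ℝ) - 2) * (1 - κ))) * fhat X) ∧
    f Xhat ≤ ((n : ℝ) / (2 + ((n : ℝ) - 2) * (1 - κ))) * f Xstar := by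
  have hn3' : (3 : ℝ) ≤ n := by exact_mod_cast hn3
  have hn0 : (0 : ℝ) < n := by linarith
  have hD : 0 < 2 + ((n : ℝ) - 2) * (1 - κ) := by
    have := mul_pos (show (0 : ℝ) < n - 2 by linarith) (sub_pos.2 hκ1)
    linarith
  have key : ∀ X ∈ C, fhat X ≤ f X ∧
      f X ≤ ((n : ℝ) / (2 + ((n : ℝ) - 2) * (1 - κ))) * fhat X := by
    intro X hX
    obtain ⟨h1, h2⟩ := hg X hX
    have hM := le_sum_singleton f hsub hnorm X
    have hK : κ * fκ X = f X - (1 - κ) * ∑ j ∈ X, f {j} := by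
      rw [hfκ X]
      field_simp
    have hfh := hfhat X
    generalize (∑ j ∈ X, f {j}) = M at *
    have hnf : n * fhat X = 2 * (κ * g X) + n * ((1 - κ) * M) := by
      rw [hfh]
      field_simp
    have h1' := mul_le_mul_of_nonneg_left h1 hκ0.le
    have h2' := mul_le_mul_of_nonneg_left h2 hκ0.le
    constructor
    · refine le_of_mul_le_mul_left ?_ hn0
      have e : 2 * (κ * (n / 2 * fκ X)) = n * (κ * fκ X) := by ring
      rw [hK] at e
      linarith
    · rw [div_mul_eq_mul_div, le_div_iff₀ hD]
      have h3 := mul_le_mul_of_nonneg_left hM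
        (mul_nonneg (show (0 : ℝ) ≤ n - 2 by linarith) (sub_pos.2 hκ1).le)
      linarith
  refine ⟨key, (key Xhat hXhat).2.trans ?_⟩
  exact mul_le_mul_of_nonneg_left ((hmin Xstar hXstar).trans (key Xstar hXstar).1)
    (div_nonneg hn0.le hD.le)
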